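/- Let D₅ = ⟨(14532), (12)(34)⟩ ⊂ S₅ act on homogeneous cubic forms in ℂ[x₀, x₁, x₂, x₃] through the pentahedral action: a permutation σ of the five linear forms ℓ₀ = x₀, ℓ₁ = x₁, ℓ₂ = x₂, ℓ₃ = x₃, ℓ₄ = −(x₀ + x₁ + x₂ + x₃) acts on a cubic form by the linear substitution of variables sending ℓ_{i} to ℓ_{σ(i)} for all i (here σ permutes the indices of ℓ₀, …, ℓ₄, identified with the letters 1, …, 5). Then the subspace of degree-3 forms invariant under every element of D₅ has dimension 2. -/

import Mathlib

/-!
Label the five forms as `v t` with `t : ZMod 5`, so that `(14532)` acts by `t ↦ t + 1` and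
`(12)(34)` by `t ↦ -t`. As `∑ t, v t = 0`, polarization shows that the products `v a ^ 2 * v b`
span the cubic forms. Averaging such a product over `D₅` gives a multiple of
`N (b - a) + N (a - b)`, where `N b = ∑ t, v t ^ 2 * v (t + b)`. So the invariants are spanned by
`N 0`, `N 1 + N (-1)` and `N 2 + N (-2)`, and the last is redundant because
`∑ b, N b = (∑ t, v t ^ 2) * ∑ t, v t = 0`.
-/

open MvPolynomial

noncomputable section

/-- The five linear forms of the pentahedron: `ℓ₀ = x₀, ℓ₁ = x₁, ℓ₂ = x₂, ℓ₃ = x₃,`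
`ℓ₄ = -(x₀ + x₁ + x₂ + x₃)`; they satisfy `ℓ₀ + ℓ₁ + ℓ₂ + ℓ₃ + ℓ₄ = 0`. -/
def pentForm : Fin 5 → MvPolynomial (Fin 4) ℂ :=
  ![X 0, X 1, X 2, X 3, -(X 0 + X 1 + X 2 + X 3)]

/-- The pentahedral action of a permutation `σ ∈ S₅` on polynomials in `x₀, …, x₃`:
the linear substitution of the variables sending `ℓᵢ` to `ℓ_{σ(i)}` for all `i`. -/
def pentAct (σ : Equiv.Perm (Fin 5)) :
    MvPolynomial (Fin 4) ℂ →ₐ[ℂ] MvPolynomial (Fin 4) ℂ :=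
  aeval fun i : Fin 4 => pentForm (σ i.castSucc)

/-- The 5-cycle `(14532)`, written on the indices `0, …, 4` of `ℓ₀, …, ℓ₄` (identifying the
letters `1, …, 5` with `0, …, 4`): `0 ↦ 3 ↦ 4 ↦ 2 ↦ 1 ↦ 0`. -/
def cyc5 : Equiv.Perm (Fin 5) :=
  ⟨fun i => ![3, 0, 1, 4, 2] i, fun i => ![1, 2, 4, 0, 3] i, by decide, by decide⟩

/-- The double transposition `(12)(34)`, written on the indices `0, …, 4`:
`0 ↔ 1`, `2 ↔ 3`. -/
def dtrans : Equiv.Perm (Fin 5) :=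
  ⟨fun i => ![1, 0, 3, 2, 4] i, fun i => ![1, 0, 3, 2, 4] i, by decide, by decide⟩

section SqCorr

variable {G A B : Type*} [AddCommGroup G] [Fintype G] [CommSemiring A] [CommSemiring B]

/-- The correlation of `v ^ 2` with `v` at lag `b`, for `v` indexed by a finite abelian group: the
sum of the translates of the cubic form `v 0 ^ 2 * v b`. -/
def sqCorr (v : G → A) (b : G) : A := ∑ t, v t ^ 2 * v (t + b)

theorem map_sqCorr {F : Type*} [FunLike F A B] [RingHomClass F A B] (φ : F) (v : G → A) (b : G) :
    φ (sqCorr v b) = sqCorr (φ ∘ v) b := by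
  simp [sqCorr]

theorem sum_sq_mul_translate (v : G → A) (a b : G) :
    ∑ t, v (a + t) ^ 2 * v (b + t) = sqCorr v (b - a) := by
  rw [sqCorr, ← Equiv.sum_comp (Equiv.addLeft a) fun t => v t ^ 2 * v (t + (b - a))]
  refine Finset.sum_congr rfl fun t _ => ?_
  rw [Equiv.coe_addLeft, show a + t + (b - a) = b + t by abel]

theorem sqCorr_comp_add_right (v : G → A) (s b : G) :
    sqCorr (fun t => v (t + s)) b = sqCorr v b := by
  simpa [sqCorr, add_comm, add_left_comm] using sum_sq_mul_translate v s (s + b)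

theorem sqCorr_comp_neg (v : G → A) (b : G) : sqCorr (fun t => v (-t)) b = sqCorr v (-b) := by
  rw [sqCorr, sqCorr, ← Equiv.sum_comp (Equiv.neg G)]
  simp [add_comm]

theorem sum_sqCorr (v : G → A) : ∑ b, sqCorr v b = (∑ t, v t ^ 2) * ∑ t, v t := by
  simp only [sqCorr]
  rw [Finset.sum_comm, Finset.sum_mul]
  refine Finset.sum_congr rfl fun t _ => ?_
  rw [← Finset.mul_sum]
  exact congrArg _ (Equiv.sum_comp (Equiv.addLeft t) v)

theorem isHomogeneous_sqCorr {σ : Type*} {n : ℕ} {v : G → MvPolynomial σ A}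
    (hv : ∀ t, (v t).IsHomogeneous n) (b : G) : (sqCorr v b).IsHomogeneous (3 * n) := by
  rw [show 3 * n = n * 2 + n by ring]
  exact IsHomogeneous.sum _ _ _ fun t _ => ((hv t).pow 2).mul (hv (t + b))

end SqCorr

section Spanning

theorem sqCorr_add_sqCorr_neg_mem_span (R : Type*) {A : Type*} [CommRing R] [CommRing A]
    [Algebra R A] {v : ZMod 5 → A} (hv : ∑ t, v t = 0) (b : ZMod 5) :
    sqCorr v b + sqCorr v (-b) ∈ Submodule.span R {sqCorr v 0, sqCorr v 1 + sqCorr v (-1)} := by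
  set W := Submodule.span R {sqCorr v 0, sqCorr v 1 + sqCorr v (-1)}
  have h0 : sqCorr v 0 ∈ W := Submodule.subset_span (by simp)
  have h1 : sqCorr v 1 + sqCorr v (-1) ∈ W := Submodule.subset_span (by simp)
  have h2 : sqCorr v 2 + sqCorr v (-2) ∈ W := by
    have hsum : ∑ b, sqCorr v b = 0 := by rw [sum_sqCorr, hv, mul_zero]
    replace hsum : sqCorr v 0 + sqCorr v 1 + sqCorr v 2 + sqCorr v (-2) + sqCorr v (-1) = 0 :=
      (Fin.sum_univ_five (sqCorr v)).symm.trans hsum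
    have : sqCorr v 2 + sqCorr v (-2) = -sqCorr v 0 - (sqCorr v 1 + sqCorr v (-1)) := by
      linear_combination hsum
    exact this ▸ sub_mem (neg_mem h0) h1
  have hb : b = 0 ∨ b = 1 ∨ b = -1 ∨ b = 2 ∨ b = -2 := by decide +revert
  rcases hb with rfl | rfl | rfl | rfl | rfl
  · rw [neg_zero]; exact add_mem h0 h0
  · exact h1
  · rwa [neg_neg, add_comm]
  · exact h2
  · rwa [neg_neg, add_comm]

theorem add_pow_three_mem {A S : Type*} [CommSemiring A] [SetLike S A] [AddSubmonoidClass S A]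
    {W : S} {x y : A} (hx : x ^ 3 ∈ W) (hxy : x ^ 2 * y ∈ W) (hyx : y ^ 2 * x ∈ W)
    (hy : y ^ 3 ∈ W) : (x + y) ^ 3 ∈ W := by
  have hexp : (x + y) ^ 3 = x ^ 3 + 3 • (x ^ 2 * y) + 3 • (y ^ 2 * x) + y ^ 3 := by ring
  rw [hexp]
  exact add_mem (add_mem (add_mem hx (nsmul_mem hxy 3)) (nsmul_mem hyx 3)) hy

variable {K A ι : Type*} [Field K] [CommRing A] [Algebra K A]

theorem mul_mul_mem_of_pow_three_mem (h6 : (6 : K) ≠ 0) {W : Submodule K A} {x y z : A}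
    (hx : x ^ 3 ∈ W) (hy : y ^ 3 ∈ W) (hz : z ^ 3 ∈ W) (hxy : (x + y) ^ 3 ∈ W)
    (hxz : (x + z) ^ 3 ∈ W) (hyz : (y + z) ^ 3 ∈ W) (hxyz : (x + y + z) ^ 3 ∈ W) :
    x * y * z ∈ W := by
  have hpolar : (6 : K) • (x * y * z) =
      (x + y + z) ^ 3 - (x + y) ^ 3 - (x + z) ^ 3 - (y + z) ^ 3 + x ^ 3 + y ^ 3 + z ^ 3 := by
    rw [Algebra.smul_def, map_ofNat]
    ring
  rw [← Submodule.smul_mem_iff W h6, hpolar]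
  exact add_mem (add_mem (add_mem (sub_mem (sub_mem (sub_mem hxyz hxy) hxz) hyz) hx) hy) hz

variable [Fintype ι]

theorem mul_mul_mem_of_sum_eq_zero (h6 : (6 : K) ≠ 0) (hι : Fintype.card ι = 5)
    {v : ι → A} (hv : ∑ i, v i = 0) {W : Submodule K A} (hW : ∀ i j, v i ^ 2 * v j ∈ W)
    (i j k : ι) : v i * v j * v k ∈ W := by
  classical
  by_cases hij : i = j
  · rw [hij, ← sq]; exact hW j k
  by_cases hik : i = k
  · rw [hik, mul_right_comm, ← sq]; exact hW k j
  by_cases hjk : j = k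
  · rw [hjk, mul_assoc, ← sq, mul_comm]; exact hW k i
  have hcard : ({i, j, k} : Finset ι)ᶜ.card = 2 := by
    rw [Finset.card_compl, hι, Finset.card_eq_three.mpr ⟨i, j, k, hij, hik, hjk, rfl⟩]
  obtain ⟨l, m, hlm, hcompl⟩ := Finset.card_eq_two.mp hcard
  have hsum : v i + v j + v k + (v l + v m) = 0 := by
    rw [← hv, ← Finset.sum_add_sum_compl {i, j, k}, hcompl, Finset.sum_pair hlm,
      Finset.sum_insert (by simp [hij, hik]), Finset.sum_pair hjk, add_assoc (v i)]
  have hpow (x : ι) : v x ^ 3 ∈ W := pow_succ (v x) 2 ▸ hW x x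
  have hcube (x y : ι) : (v x + v y) ^ 3 ∈ W :=
    add_pow_three_mem (hpow x) (hW x y) (hW y x) (hpow y)
  have hijk : (v i + v j + v k) ^ 3 ∈ W := by
    rw [eq_neg_of_add_eq_zero_left hsum, Odd.neg_pow (by decide)]
    exact neg_mem (hcube l m)
  exact mul_mul_mem_of_pow_three_mem h6 (hpow i) (hpow j) (hpow k) (hcube i j) (hcube i k)
    (hcube j k) hijk

open scoped Pointwise in
theorem span_range_pow_three_le_of_sum_eq_zero (h6 : (6 : K) ≠ 0) (hι : Fintype.card ι = 5)
    {v : ι → A} (hv : ∑ i, v i = 0) {W : Submodule K A} (hW : ∀ i j, v i ^ 2 * v j ∈ W) :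
    Submodule.span K (Set.range v) ^ 3 ≤ W := by
  rw [Submodule.span_pow, Submodule.span_le, pow_succ (Set.range v), sq]
  rintro _ ⟨_, ⟨_, ⟨i, rfl⟩, _, ⟨j, rfl⟩, rfl⟩, _, ⟨k, rfl⟩, rfl⟩
  exact mul_mul_mem_of_sum_eq_zero h6 hι hv hW i j k

end Spanning

theorem pentForm_castSucc (j : Fin 4) : pentForm j.castSucc = X j := by
  fin_cases j <;> rfl

theorem pentForm_last : pentForm (Fin.last 4) = -∑ j, X j := by
  rw [Fin.sum_univ_four]; rfl

theorem sum_pentForm : ∑ i, pentForm i = 0 := by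
  simp only [Fin.sum_univ_castSucc, pentForm_castSucc, pentForm_last, add_neg_cancel]

theorem isHomogeneous_pentForm (i : Fin 5) : (pentForm i).IsHomogeneous 1 := by
  induction i using Fin.lastCases with
  | cast j => exact pentForm_castSucc j ▸ isHomogeneous_X ℂ j
  | last =>
    exact pentForm_last ▸ (IsHomogeneous.sum _ _ _ fun j _ => isHomogeneous_X ℂ j).neg

theorem map_pentForm {A F : Type*} [Ring A] [FunLike F (MvPolynomial (Fin 4) ℂ) A]
    [RingHomClass F (MvPolynomial (Fin 4) ℂ) A] (φ : F) {u : Fin 5 → A} (hu : ∑ i, u i = 0)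
    (hφ : ∀ j : Fin 4, φ (X j) = u j.castSucc) (i : Fin 5) : φ (pentForm i) = u i := by
  induction i using Fin.lastCases with
  | cast j => rw [pentForm_castSucc, hφ]
  | last =>
    rw [Fin.sum_univ_castSucc] at hu
    simp only [pentForm_last, map_neg, map_sum, hφ, neg_eq_of_add_eq_zero_right hu]

theorem pentAct_X (σ : Equiv.Perm (Fin 5)) (j : Fin 4) :
    pentAct σ (X j) = pentForm (σ j.castSucc) :=
  aeval_X _ j

theorem pentAct_pentForm (σ : Equiv.Perm (Fin 5)) (i : Fin 5) :
    pentAct σ (pentForm i) = pentForm (σ i) :=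
  map_pentForm (pentAct σ) ((Equiv.sum_comp σ pentForm).trans sum_pentForm) (pentAct_X σ) i

theorem pentAct_one : pentAct 1 = AlgHom.id ℂ _ :=
  algHom_ext fun j => by rw [pentAct_X, Equiv.Perm.one_apply, pentForm_castSucc, AlgHom.id_apply]

theorem pentAct_mul (σ τ : Equiv.Perm (Fin 5)) :
    pentAct (σ * τ) = (pentAct σ).comp (pentAct τ) :=
  algHom_ext fun j => by
    rw [AlgHom.comp_apply, pentAct_X, pentAct_X, pentAct_pentForm, Equiv.Perm.mul_apply]

/-- The stabilizer of a polynomial under the pentahedral action, bundled as a subgroup so that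
invariance under a generated group can be tested on generators. -/
def pentStabilizer (p : MvPolynomial (Fin 4) ℂ) : Subgroup (Equiv.Perm (Fin 5)) where
  carrier := {σ | pentAct σ p = p}
  one_mem' := by simp [pentAct_one]
  mul_mem' {σ τ} (hσ : pentAct σ p = p) (hτ : pentAct τ p = p) := by simp [pentAct_mul, hσ, hτ]
  inv_mem' {σ} (hσ : pentAct σ p = p) := by
    change pentAct σ⁻¹ p = p
    nth_rw 1 [← hσ]
    rw [← AlgHom.comp_apply, ← pentAct_mul, inv_mul_cancel, pentAct_one, AlgHom.id_apply]

theorem mem_pentStabilizer {p : MvPolynomial (Fin 4) ℂ} {σ : Equiv.Perm (Fin 5)} :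
    σ ∈ pentStabilizer p ↔ pentAct σ p = p :=
  Iff.rfl

theorem closure_le_pentStabilizer_iff {p : MvPolynomial (Fin 4) ℂ} :
    Subgroup.closure {cyc5, dtrans} ≤ pentStabilizer p ↔
      pentAct cyc5 p = p ∧ pentAct dtrans p = p := by
  simp [Subgroup.closure_le, Set.insert_subset_iff, mem_pentStabilizer]

/-- The cyclic labelling of the five indices in which `cyc5` is `t ↦ t + 1` and `dtrans` is
`t ↦ -t`; the label `0` goes to the index `4` fixed by `dtrans`. -/
def vertex : ZMod 5 ≃ Fin 5 where
  toFun t := ![4, 2, 1, 0, 3] t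
  invFun i := ![3, 2, 1, 4, 0] i
  left_inv := by decide
  right_inv := by decide

theorem cyc5_pow_vertex (s t : ZMod 5) : (cyc5 ^ s.val) (vertex t) = vertex (t + s) := by
  decide +revert

theorem dtrans_vertex (t : ZMod 5) : dtrans (vertex t) = vertex (-t) := by
  decide +revert

/-- The five linear forms of the pentahedron in the cyclic order of `vertex`, as the sides of a
pentagon on which `D₅` acts by its usual symmetries. -/
def pentagon (t : ZMod 5) : MvPolynomial (Fin 4) ℂ := pentForm (vertex t)

theorem sum_pentagon : ∑ t, pentagon t = 0 :=
  (Equiv.sum_comp vertex pentForm).trans sum_pentForm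

theorem pentAct_cyc5_pow_pentagon (s t : ZMod 5) :
    pentAct (cyc5 ^ s.val) (pentagon t) = pentagon (t + s) := by
  rw [pentagon, pentAct_pentForm, cyc5_pow_vertex, pentagon]

theorem pentAct_dtrans_pentagon (t : ZMod 5) : pentAct dtrans (pentagon t) = pentagon (-t) := by
  rw [pentagon, pentAct_pentForm, dtrans_vertex, pentagon]

theorem pentAct_cyc5_sqCorr (b : ZMod 5) :
    pentAct cyc5 (sqCorr pentagon b) = sqCorr pentagon b := by
  have hcomp : pentAct cyc5 ∘ pentagon = fun t => pentagon (t + 1) :=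
    funext (pentAct_cyc5_pow_pentagon 1)
  rw [map_sqCorr, hcomp, sqCorr_comp_add_right]

theorem pentAct_dtrans_sqCorr (b : ZMod 5) :
    pentAct dtrans (sqCorr pentagon b) = sqCorr pentagon (-b) := by
  have hcomp : pentAct dtrans ∘ pentagon = fun t => pentagon (-t) :=
    funext pentAct_dtrans_pentagon
  rw [map_sqCorr, hcomp, sqCorr_comp_neg]

/-- The pencil of cubic forms spanned by `∑ t, v t ^ 3` and `∑ t, v t ^ 2 * (v (t + 1) + v (t - 1))`
for `v = pentagon`. -/
def invariantPencil : Submodule ℂ (MvPolynomial (Fin 4) ℂ) :=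
  Submodule.span ℂ {sqCorr pentagon 0, sqCorr pentagon 1 + sqCorr pentagon (-1)}

theorem exists_eval_sqCorr_pentagon {w : ZMod 5 → ℤ} (hw : ∑ t, w t = 0) :
    ∃ x : Fin 4 → ℂ, ∀ b, eval x (sqCorr pentagon b) = (sqCorr w b : ℤ) := by
  let u (i : Fin 5) : ℂ := w (vertex.symm i)
  have hu : ∑ i, u i = 0 := by
    rw [Equiv.sum_comp vertex.symm fun t => (w t : ℂ), ← Int.cast_sum, hw, Int.cast_zero]
  let x (j : Fin 4) : ℂ := u j.castSucc
  have hx (t : ZMod 5) : eval x (pentagon t) = w t := by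
    rw [pentagon, map_pentForm (eval x) hu fun j => eval_X j]
    exact congrArg (fun t => (w t : ℂ)) (vertex.symm_apply_apply t)
  refine ⟨x, fun b => ?_⟩
  rw [map_sqCorr, ← eq_intCast (Int.castRingHom ℂ), map_sqCorr]
  exact congrArg (sqCorr · b) (funext hx)

theorem linearIndependent_sqCorr_pentagon :
    LinearIndependent ℂ ![sqCorr pentagon 0, sqCorr pentagon 1 + sqCorr pentagon (-1)] := by
  rw [LinearIndependent.pair_iff]
  intro r s h
  have heval {w : ZMod 5 → ℤ} {m n : ℤ} (hw : ∑ t, w t = 0) (hm : sqCorr w 0 = m)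
      (hn : sqCorr w 1 + sqCorr w (-1) = n) : r * m + s * n = 0 := by
    obtain ⟨x, hx⟩ := exists_eval_sqCorr_pentagon hw
    have := congrArg (eval x) h
    rwa [map_add, smul_eval, smul_eval, map_add, hx, hx, hx, ← Int.cast_add, hm, hn,
      map_zero] at this
  have h1 := heval (w := ![1, -1, 2, -2, 0]) (m := 0) (n := -2) (by decide) (by decide) (by decide)
  have h2 := heval (w := ![-2, 1, 1, 1, -1]) (m := -6) (n := 0) (by decide) (by decide) (by decide)
  constructor
  · simpa using h2
  · simpa using h1

theorem isHomogeneous_sqCorr_pentagon (b : ZMod 5) : (sqCorr pentagon b).IsHomogeneous 3 :=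
  isHomogeneous_sqCorr (fun t => isHomogeneous_pentForm (vertex t)) b

/-- Ten times the Reynolds operator of `D₅`. The sum runs over the products `cyc5 ^ s` and
`cyc5 ^ s * dtrans`, which avoids enumerating the closure that defines the group. -/
def dihedralSum : MvPolynomial (Fin 4) ℂ →ₗ[ℂ] MvPolynomial (Fin 4) ℂ :=
  ∑ s : ZMod 5, (pentAct (cyc5 ^ s.val)).toLinearMap ∘ₗ (.id + (pentAct dtrans).toLinearMap)

theorem dihedralSum_apply (p : MvPolynomial (Fin 4) ℂ) :
    dihedralSum p = ∑ s : ZMod 5, pentAct (cyc5 ^ s.val) (p + pentAct dtrans p) := by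
  simp [dihedralSum]

theorem dihedralSum_eq_smul {p : MvPolynomial (Fin 4) ℂ}
    (hp : Subgroup.closure {cyc5, dtrans} ≤ pentStabilizer p) :
    dihedralSum p = (10 : ℂ) • p := by
  obtain ⟨hcyc, hdtrans⟩ := closure_le_pentStabilizer_iff.mp hp
  have hpow (n : ℕ) : pentAct (cyc5 ^ n) p = p := (pentStabilizer p).pow_mem hcyc n
  simp only [dihedralSum_apply, hdtrans, map_add, hpow, Finset.sum_const, Finset.card_univ,
    ZMod.card]
  module

theorem dihedralSum_sq_mul (a b : ZMod 5) :
    dihedralSum (pentagon a ^ 2 * pentagon b) =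
      sqCorr pentagon (b - a) + sqCorr pentagon (-(b - a)) := by
  simp only [dihedralSum_apply, map_add, map_mul, map_pow, pentAct_dtrans_pentagon,
    pentAct_cyc5_pow_pentagon, Finset.sum_add_distrib, sum_sq_mul_translate, neg_sub_neg, neg_sub]

theorem homogeneousSubmodule_three_le_of_sq_mul_mem {W : Submodule ℂ (MvPolynomial (Fin 4) ℂ)}
    (hW : ∀ a b, pentagon a ^ 2 * pentagon b ∈ W) : homogeneousSubmodule (Fin 4) ℂ 3 ≤ W := by
  have hX : Set.range X ⊆ Set.range pentagon := by
    rintro _ ⟨j, rfl⟩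
    exact ⟨vertex.symm j.castSucc, by rw [pentagon, Equiv.apply_symm_apply, pentForm_castSucc]⟩
  rw [← homogeneousSubmodule_one_pow, homogeneousSubmodule_one_eq_span_X]
  exact (pow_le_pow_left' (Submodule.span_mono hX) 3).trans
    (span_range_pow_three_le_of_sum_eq_zero (by norm_num) (ZMod.card 5) sum_pentagon hW)

theorem dihedralSum_mem_invariantPencil {p : MvPolynomial (Fin 4) ℂ} (hp : p.IsHomogeneous 3) :
    dihedralSum p ∈ invariantPencil :=
  homogeneousSubmodule_three_le_of_sq_mul_mem (W := invariantPencil.comap dihedralSum)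
    (fun a b => by
      rw [Submodule.mem_comap, dihedralSum_sq_mul]
      exact sqCorr_add_sqCorr_neg_mem_span ℂ sum_pentagon (b - a)) hp

theorem isHomogeneous_of_mem_invariantPencil {p : MvPolynomial (Fin 4) ℂ}
    (hp : p ∈ invariantPencil) : p.IsHomogeneous 3 := by
  have hle : invariantPencil ≤ homogeneousSubmodule (Fin 4) ℂ 3 := by
    rw [invariantPencil, Submodule.span_le, Set.pair_subset_iff]
    exact ⟨isHomogeneous_sqCorr_pentagon 0,
      (isHomogeneous_sqCorr_pentagon 1).add (isHomogeneous_sqCorr_pentagon (-1))⟩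
  exact hle hp

theorem closure_le_pentStabilizer_of_mem_invariantPencil {p : MvPolynomial (Fin 4) ℂ}
    (hp : p ∈ invariantPencil) : Subgroup.closure {cyc5, dtrans} ≤ pentStabilizer p := by
  obtain ⟨a, b, rfl⟩ := Submodule.mem_span_pair.mp hp
  rw [closure_le_pentStabilizer_iff]
  simp only [map_add, map_smul, pentAct_cyc5_sqCorr, pentAct_dtrans_sqCorr, neg_zero, neg_neg,
    add_comm (sqCorr pentagon (-1)), and_self]

theorem mem_invariantPencil_of_isHomogeneous {p : MvPolynomial (Fin 4) ℂ} (hp : p.IsHomogeneous 3)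
    (hinv : Subgroup.closure {cyc5, dtrans} ≤ pentStabilizer p) : p ∈ invariantPencil := by
  have hsum := dihedralSum_mem_invariantPencil hp
  rwa [dihedralSum_eq_smul hinv, Submodule.smul_mem_iff _ (by norm_num)] at hsum

/-- The space of cubic forms invariant under the pentahedral action of every element of
the dihedral group `D₅ = ⟨(14532), (12)(34)⟩ ⊂ S₅` has dimension 2. -/
theorem D5_invariant_cubics_two_dimensional :
    ∃ f g : MvPolynomial (Fin 4) ℂ, LinearIndependent ℂ ![f, g] ∧
      {p : MvPolynomial (Fin 4) ℂ | p.IsHomogeneous 3 ∧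
          ∀ σ ∈ Subgroup.closure {cyc5, dtrans}, pentAct σ p = p} =
        ↑(Submodule.span ℂ {f, g}) := by
  refine ⟨_, _, linearIndependent_sqCorr_pentagon, Set.Subset.antisymm ?_ ?_⟩
  · rintro p ⟨hp, hinv⟩
    exact mem_invariantPencil_of_isHomogeneous hp hinv
  · intro p hp
    exact ⟨isHomogeneous_of_mem_invariantPencil hp,
      closure_le_pentStabilizer_of_mem_invariantPencil hp⟩
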